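/- arXiv:1904.09423 — 2 statements merged into one kernel-verified Lean document; each statement's English description precedes it below -/
import Mathlib

section
/- Let $S$ be a nonzero seminorm on an infinite-dimensional vector space $X$ over $\mathbb{F}$ (either $\mathbb{R}$ or $\mathbb{C}$). Then there exists a norm $N$ on $X$ such that $S$ is discontinuous at every point of $X$ with respect to the topology induced by $N$. -/
open Filter Topology

/-- `S` is a seminorm on the `𝕜`-vector space `X`: nonnegative, absolutely
homogeneous, and subadditive. -/
def IsSeminormOn (𝕜 : Type*) [RCLike 𝕜] {X : Type*} [AddCommGroup X] [Module 𝕜 X]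
    (S : X → ℝ) : Prop :=
  (∀ x, 0 ≤ S x) ∧ (∀ (a : 𝕜) (x : X), S (a • x) = ‖a‖ * S x) ∧
    (∀ x y, S (x + y) ≤ S x + S y)

/-- `N` is a norm on the `𝕜`-vector space `X`: a positive-definite seminorm. -/
def IsNormOn (𝕜 : Type*) [RCLike 𝕜] {X : Type*} [AddCommGroup X] [Module 𝕜 X]
    (N : X → ℝ) : Prop :=
  IsSeminormOn 𝕜 N ∧ ∀ x : X, x ≠ 0 → 0 < N x

/-- `S` is continuous at `x` with respect to the metric topology induced by `N`
via the distance `d(x, y) = N (x - y)`. -/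
def ContinuousAtWrt {X : Type*} [AddCommGroup X] (N S : X → ℝ) (x : X) : Prop :=
  ∀ ε : ℝ, 0 < ε → ∃ δ : ℝ, 0 < δ ∧ ∀ y : X, N (y - x) < δ → |S y - S x| < ε
/-- For every nonzero seminorm S on an infinite-dimensional vector space X
over ℝ or ℂ, there exists a norm N on X with respect to which S is discontinuous at
every point. -/
theorem exists_norm_seminorm_discontinuous
    {𝕜 X : Type*} [RCLike 𝕜] [AddCommGroup X] [Module 𝕜 X]
    (hinf : ¬ FiniteDimensional 𝕜 X)
    (S : X → ℝ) (hS : IsSeminormOn 𝕜 S) (hS0 : ∃ x : X, S x ≠ 0) :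
    ∃ N : X → ℝ, IsNormOn 𝕜 N ∧ ∀ x : X, ¬ ContinuousAtWrt N S x := by
  classical
  obtain ⟨hnn, hsm, hadd⟩ := hS
  obtain ⟨u, hu⟩ := hS0
  have hneg : ∀ x, S (-x) = S x := fun x => by
    have := hsm (-1) x
    simpa using this
  have hspan : (⊤ : Submodule 𝕜 X) ≤ Submodule.span 𝕜 {x : X | S x ≠ 0} := by
    intro x _
    by_cases hx : S x = 0
    · have h1 : S (x + u) ≠ 0 := by
        intro h
        have h2 := hadd (x + u) (-x)
        rw [hneg, h, hx, add_neg_cancel_comm] at h2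
        exact hu (le_antisymm (by linarith) (hnn u))
      have h2 := Submodule.sub_mem _ (Submodule.subset_span (R := 𝕜) (s := {x : X | S x ≠ 0}) h1)
        (Submodule.subset_span hu)
      simpa using h2
    · exact Submodule.subset_span hx
  obtain ⟨ι, b, hb⟩ : ∃ (ι : Type _) (b : Module.Basis ι 𝕜 X), ∀ i, S (b i) ≠ 0 :=
    ⟨_, Module.Basis.ofSpan hspan, fun i => Module.Basis.ofSpan_subset hspan ⟨i, rfl⟩⟩
  have hι : Infinite ι := by
    by_contra h
    rw [not_infinite_iff_finite] at h
    exact hinf (Module.Finite.of_basis b)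
  have hpos : ∀ i, 0 < S (b i) := fun i => lt_of_le_of_ne (hnn _) (hb i).symm
  let f : ℕ ↪ ι := Infinite.natEmbedding ι
  let g : ι → ℕ := Function.invFun f
  have hg : ∀ n, g (f n) = n := Function.leftInverse_invFun f.injective
  let w : ι → ℝ := fun i => S (b i) / (g i + 1)
  have hw : ∀ i, 0 < w i := fun i => div_pos (hpos i) (by positivity)
  let N : X → ℝ := fun x => (b.repr x).sum fun i c => ‖c‖ * w i
  have hNs : ∀ (x : X) (s : Finset ι), (b.repr x).support ⊆ s →
      N x = ∑ i ∈ s, ‖b.repr x i‖ * w i := fun x s hs =>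
    Finsupp.sum_of_support_subset _ hs _ (by simp)
  have hNb : ∀ (c : 𝕜) (i : ι), N (c • b i) = ‖c‖ * w i := by
    intro c i
    simp [N]
  refine ⟨N, ⟨⟨?_, ?_, ?_⟩, ?_⟩, ?_⟩
  · intro x
    exact Finset.sum_nonneg fun i _ => mul_nonneg (norm_nonneg _) (hw i).le
  · intro a x
    rw [hNs x _ subset_rfl, hNs (a • x) (b.repr x).support
      (by rw [map_smul]; exact Finsupp.support_smul), Finset.mul_sum]
    refine Finset.sum_congr rfl fun i _ => ?_
    simp [mul_assoc]
  · intro x y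
    rw [hNs x ((b.repr x).support ∪ (b.repr y).support) Finset.subset_union_left,
      hNs y ((b.repr x).support ∪ (b.repr y).support) Finset.subset_union_right,
      hNs (x + y) ((b.repr x).support ∪ (b.repr y).support)
        (by rw [map_add]; exact Finsupp.support_add), ← Finset.sum_add_distrib]
    refine Finset.sum_le_sum fun i _ => ?_
    rw [← add_mul, map_add]
    exact mul_le_mul_of_nonneg_right (norm_add_le _ _) (hw i).le
  · intro x hx
    refine Finset.sum_pos (fun i hi => mul_pos ?_ (hw i)) ?_
    · exact norm_pos_iff.2 (Finsupp.mem_support_iff.1 hi)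
    · rw [Finsupp.support_nonempty_iff]
      simpa using hx
  · intro x hc
    obtain ⟨δ, hδ, h⟩ := hc 1 one_pos
    have hx := hnn x
    obtain ⟨n, hn⟩ := exists_nat_gt ((2 * S x + 1) / δ)
    have hp := hpos (f n)
    have hcn : ‖(((2 * S x + 1) / S (b (f n)) : ℝ) : 𝕜)‖ = (2 * S x + 1) / S (b (f n)) := by
      rw [RCLike.norm_ofReal, abs_of_nonneg (by positivity)]
    generalize hcdef : (((2 * S x + 1) / S (b (f n)) : ℝ) : 𝕜) = c at hcn
    have h1 := h (x + c • b (f n)) (by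
      rw [add_sub_cancel_left, hNb, hcn]
      simp only [w, hg]
      rw [div_mul_div_cancel₀ hp.ne', div_lt_iff₀ (by positivity)]
      rw [div_lt_iff₀ hδ] at hn
      nlinarith)
    have h2 : S (c • b (f n)) = 2 * S x + 1 := by
      rw [hsm, hcn, div_mul_cancel₀ _ hp.ne']
    have h3 := hadd (x + c • b (f n)) (-x)
    rw [hneg, add_neg_cancel_comm, h2] at h3
    have := (abs_lt.1 h1).2
    linarith
end

section
/- Let $S$ be a nonzero seminorm on a vector space $X$ over $\mathbb{F}$ (either $\mathbb{R}$ or $\mathbb{C}$). Then $S$ is continuous with respect to the topology induced by every norm on $X$ if and only if $X$ is finite-dimensional. -/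
open Filter Topology

theorem aux_sum_le {𝕜 X : Type*} [RCLike 𝕜] [AddCommGroup X] [Module 𝕜 X]
    (S : X → ℝ) (hS : IsSeminormOn 𝕜 S) {ι : Type*} (s : Finset ι) (f : ι → X) :
    S (∑ i ∈ s, f i) ≤ ∑ i ∈ s, S (f i) := by
  classical
  induction s using Finset.induction_on with
  | empty =>
    have := hS.2.1 0 0
    simp at this
    simp [this]
  | insert a s ha ih =>
    rw [Finset.sum_insert ha, Finset.sum_insert ha]
    exact (hS.2.2 _ _).trans (by linarith)

theorem aux_bound {𝕜 X : Type*} [RCLike 𝕜] [NormedAddCommGroup X] [NormedSpace 𝕜 X]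
    [FiniteDimensional 𝕜 X] (S : X → ℝ) (hS : IsSeminormOn 𝕜 S) :
    ∃ C : ℝ, 0 < C ∧ ∀ x, S x ≤ C * ‖x‖ := by
  let b := Module.finBasis 𝕜 X
  let L := fun i => LinearMap.toContinuousLinearMap (b.coord i)
  have h0 : 0 ≤ ∑ i, ‖L i‖ * S (b i) :=
    Finset.sum_nonneg fun i _ => mul_nonneg (norm_nonneg _) (hS.1 _)
  refine ⟨(∑ i, ‖L i‖ * S (b i)) + 1, by linarith, fun x => ?_⟩
  have h1 : S x ≤ ∑ i, ‖L i x‖ * S (b i) := by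
    have h := aux_sum_le S hS Finset.univ (fun i => b.repr x i • b i)
    rw [b.sum_repr] at h
    refine h.trans (le_of_eq (Finset.sum_congr rfl fun i _ => ?_))
    rw [hS.2.1]
    rfl
  have h2 : ∑ i, ‖L i x‖ * S (b i) ≤ (∑ i, ‖L i‖ * S (b i)) * ‖x‖ := by
    rw [Finset.sum_mul]
    refine Finset.sum_le_sum fun i _ => ?_
    have := mul_le_mul_of_nonneg_right ((L i).le_opNorm x) (hS.1 (b i))
    linarith
  have := norm_nonneg x
  linarith

theorem aux_abs {𝕜 X : Type*} [RCLike 𝕜] [AddCommGroup X] [Module 𝕜 X]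
    (S : X → ℝ) (hS : IsSeminormOn 𝕜 S) (x y : X) : |S y - S x| ≤ S (y - x) := by
  have h1 := hS.2.2 (y - x) x
  have h2 := hS.2.2 (x - y) y
  have h3 := hS.2.1 (-1) (y - x)
  simp at h1 h2 h3
  rw [abs_le]
  constructor <;> linarith

theorem aux_bound' {𝕜 X : Type*} [RCLike 𝕜] [AddCommGroup X] [Module 𝕜 X]
    [FiniteDimensional 𝕜 X] (S : X → ℝ) (hS : IsSeminormOn 𝕜 S) (N : X → ℝ)
    (hN : IsNormOn 𝕜 N) :
    ∃ C : ℝ, 0 < C ∧ ∀ x, S x ≤ C * N x := by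
  let : Norm X := ⟨N⟩
  have core : NormedSpace.Core 𝕜 X :=
    { norm_nonneg := hN.1.1
      norm_smul := hN.1.2.1
      norm_triangle := hN.1.2.2
      norm_eq_zero_iff := fun x => by
        constructor
        · intro h
          by_contra hx
          exact (hN.2 x hx).ne' h
        · rintro rfl
          have := hN.1.2.1 0 0
          simp only [zero_smul, norm_zero, zero_mul] at this
          exact this }
  let := NormedAddCommGroup.ofCore core
  let : NormedSpace 𝕜 X := NormedSpace.ofCore core
  exact aux_bound S hS

/-- A nonzero seminorm S on a vector space X over ℝ or ℂ is continuous
with respect to every norm on X iff X is finite-dimensional. -/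
theorem seminorm_continuous_wrt_all_norms_iff_finiteDimensional
    {𝕜 X : Type*} [RCLike 𝕜] [AddCommGroup X] [Module 𝕜 X]
    (S : X → ℝ) (hS : IsSeminormOn 𝕜 S) (hS0 : ∃ x : X, S x ≠ 0) :
    (∀ N : X → ℝ, IsNormOn 𝕜 N → ∀ x : X, ContinuousAtWrt N S x) ↔
      FiniteDimensional 𝕜 X := by
  constructor
  · intro H
    obtain ⟨x₀, hx₀⟩ := hS0
    have hspan : ⊤ ≤ Submodule.span 𝕜 {x : X | S x ≠ 0} := by
      intro x _
      by_cases hx : S x = 0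
      · have h : S (x + x₀) ≠ 0 := by
          intro h
          have h1 := aux_abs S hS (x + x₀) x
          have h3 := hS.2.1 (-1) x₀
          have h4 := aux_abs S hS x (x + x₀)
          have h5 := hS.2.2 (x + x₀) (-x)
          have h6 := hS.2.1 (-1) x
          simp at h5 h6
          have := hS.1 x₀
          exact hx₀ (by linarith)
        have h2 := Submodule.sub_mem _ (Submodule.subset_span (R := 𝕜) h)
          (Submodule.subset_span (R := 𝕜) (s := {x : X | S x ≠ 0}) hx₀)
        simpa using h2
      · exact Submodule.subset_span hx
    obtain ⟨ι, b, hb⟩ : ∃ (ι : Set X) (b : Module.Basis ι 𝕜 X), ∀ i, S (b i) ≠ 0 :=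
      ⟨_, Module.Basis.ofSpan hspan,
        fun i => Module.Basis.ofSpan_subset hspan (Set.mem_range_self i)⟩
    have hpos : ∀ i, 0 < S (b i) := fun i => lt_of_le_of_ne (hS.1 _) (hb i).symm
    by_contra hfin
    have hinf : Infinite ι := by
      by_contra h
      rw [not_infinite_iff_finite] at h
      exact hfin (Module.Finite.of_basis b)
    obtain ⟨g, hg⟩ : ∃ g : ι → ℕ, Function.Surjective g :=
      ⟨_, Function.invFun_surjective (Infinite.natEmbedding ι).injective⟩
    let w : ι → ℝ := fun i => S (b i) / (g i + 1)
    have hw : ∀ i, 0 < w i := fun i => div_pos (hpos i) (by positivity)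
    let N : X → ℝ := fun x => (b.repr x).sum fun i c => ‖c‖ * w i
    have hNs : ∀ (x : X) (s : Finset ι), (b.repr x).support ⊆ s →
        N x = ∑ i ∈ s, ‖b.repr x i‖ * w i := fun x s hs =>
      Finsupp.sum_of_support_subset _ hs _ (by simp)
    have hN : IsNormOn 𝕜 N := by
      classical
      refine ⟨⟨fun x => ?_, fun a x => ?_, fun x y => ?_⟩, fun x hx => ?_⟩
      · exact Finset.sum_nonneg fun i _ => mul_nonneg (norm_nonneg _) (hw i).le
      · rw [hNs (a • x) (b.repr x).support (by rw [map_smul]; exact Finsupp.support_smul),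
          hNs x _ subset_rfl, Finset.mul_sum]
        refine Finset.sum_congr rfl fun i _ => ?_
        simp [mul_assoc]
      · rw [hNs (x + y) ((b.repr x).support ∪ (b.repr y).support)
            (by rw [map_add]; exact Finsupp.support_add),
          hNs x _ Finset.subset_union_left, hNs y _ Finset.subset_union_right,
          ← Finset.sum_add_distrib]
        refine Finset.sum_le_sum fun i _ => ?_
        rw [← add_mul, map_add]
        exact mul_le_mul_of_nonneg_right (norm_add_le _ _) (hw i).le
      · refine Finset.sum_pos (fun i hi => mul_pos ?_ (hw i)) ?_
        · exact norm_pos_iff.2 (Finsupp.mem_support_iff.1 hi)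
        · rw [Finsupp.support_nonempty_iff]
          simpa using hx
    obtain ⟨δ, hδ, h⟩ := H N hN 0 1 one_pos
    obtain ⟨n, hn⟩ := exists_nat_one_div_lt hδ
    obtain ⟨i, rfl⟩ := hg n
    have hNb : N (b i) = w i := by
      simp [N, Finsupp.sum_single_index]
    have hnorm : ‖(((S (b i))⁻¹ : ℝ) : 𝕜)‖ = (S (b i))⁻¹ := by
      rw [RCLike.norm_ofReal, abs_of_pos (inv_pos.2 (hpos i))]
    have hS00 : S 0 = 0 := by
      have := hS.2.1 0 0
      simpa using this
    have h3 := h ((((S (b i))⁻¹ : ℝ) : 𝕜) • b i) (by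
      rw [sub_zero, hN.1.2.1, hNb, hnorm]
      have hbi := hb i
      have hcalc : (S (b i))⁻¹ * (S (b i) / ((g i : ℝ) + 1)) = 1 / ((g i : ℝ) + 1) := by
        field_simp
      exact hcalc.trans_lt hn)
    rw [hS.2.1, hnorm, hS00, inv_mul_cancel₀ (hb i)] at h3
    simp at h3
  · intro hfd N hN x ε hε
    obtain ⟨C, hC, h⟩ := aux_bound' S hS N hN
    refine ⟨ε / C, div_pos hε hC, fun y hy => ?_⟩
    rw [lt_div_iff₀ hC] at hy
    have := aux_abs S hS x y
    have := h (y - x)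
    linarith
end
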